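/- Let T be a deterministic database of n transactions t_1,…,t_n over a finite item set I, let X ⊆ I be a nonempty itemset, and let w : I → ℝ assign a private weight to each item (items outside the checkset X are given weight 1, so each transaction t is replicated with weight ∏_{x ∈ t ∩ X} w_x in the virtually transformed database T'). Then the weighted count checker on T' can be computed from the original supports: Σ_{i : t_i ∩ X ≠ ∅} ∏_{x ∈ t_i ∩ X} w_x = Σ_{∅ ≠ Y ⊆ X} ( Σ_{∅ ≠ Z ⊆ Y} (−1)^{|Y| − |Z|} ∏_{z ∈ Z} w_z ) · sup(Y), where sup(Y) = #{i : Y ⊆ t_i}. -/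

import Mathlib

open Finset in
lemma coeff_eq {α : Type*} [DecidableEq α] (w : α → ℝ) (Y : Finset α) :
    ∑ Z ∈ Y.powerset.filter (fun Z => Z.Nonempty),
      (-1 : ℝ) ^ (Y.card - Z.card) * ∏ z ∈ Z, w z = ∏ y ∈ Y, (w y + (-1)) - ∏ _y ∈ Y, (-1 : ℝ) := by
  have h1 : (Y.powerset.filter (fun Z => Z.Nonempty)) = Y.powerset.erase ∅ := by
    ext Z; simp [Finset.nonempty_iff_ne_empty, and_comm]
  rw [h1, Finset.prod_add, eq_sub_iff_add_eq]
  rw [← Finset.sum_erase_add _ _ (Finset.empty_mem_powerset Y)]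
  congr 1
  · refine Finset.sum_congr rfl fun Z hZ => ?_
    have hZ' : Z ⊆ Y := Finset.mem_powerset.1 (Finset.mem_of_mem_erase hZ)
    rw [Finset.prod_const, Finset.card_sdiff_of_subset hZ', mul_comm]
  · simp

lemma sum_coeff {α : Type*} [DecidableEq α] (w : α → ℝ) (S : Finset α) :
    ∑ Y ∈ S.powerset.filter (fun Y => Y.Nonempty),
      ∑ Z ∈ Y.powerset.filter (fun Z => Z.Nonempty),
        (-1 : ℝ) ^ (Y.card - Z.card) * ∏ z ∈ Z, w z
      = if S.Nonempty then ∏ x ∈ S, w x else 0 := by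
  have h1 : (S.powerset.filter (fun Z => Z.Nonempty)) = S.powerset.erase ∅ := by
    ext Z; simp [Finset.nonempty_iff_ne_empty, and_comm]
  rw [h1, Finset.sum_congr rfl (fun Y _ => coeff_eq w Y), Finset.sum_erase _ (by simp),
    Finset.sum_sub_distrib, ← Finset.prod_add_one, ← Finset.prod_add_one]
  split_ifs with h
  · simp [h.card_pos.ne']
  · simp [Finset.not_nonempty_iff_eq_empty.1 h]

/-- **Private-weight checker verification for deterministic FI mining.**
Each transaction `t i` is virtually replicated with weight `∏_{x ∈ t i ∩ X} w x`; the
weighted count checker of the nonempty checkset `X ⊆ I` on the transformed database equals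
`Σ_{∅ ≠ Y ⊆ X} ( Σ_{∅ ≠ Z ⊆ Y} (−1)^{|Y|−|Z|} ∏_{z∈Z} w z ) · sup(Y)` computed from the
original supports `sup(Y) = #{i : Y ⊆ t i}`. -/
theorem private_weight_checker_verification
    {α : Type*} [DecidableEq α] (n : ℕ) (I : Finset α)
    (t : Fin n → Finset α) (ht : ∀ i, t i ⊆ I)
    (w : α → ℝ)
    (X : Finset α) (hXI : X ⊆ I) (hX : X.Nonempty) :
    ∑ i ∈ Finset.univ.filter (fun i : Fin n => (t i ∩ X).Nonempty),
        ∏ x ∈ t i ∩ X, w x =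
      ∑ Y ∈ X.powerset.filter (fun Y => Y.Nonempty),
        (∑ Z ∈ Y.powerset.filter (fun Z => Z.Nonempty),
            (-1 : ℝ) ^ (Y.card - Z.card) * ∏ z ∈ Z, w z) *
          ((Finset.univ.filter (fun i : Fin n => Y ⊆ t i)).card : ℝ) := by
  rw [Finset.sum_filter, Finset.sum_congr rfl (fun i _ => (sum_coeff w (t i ∩ X)).symm)]
  have h : ∀ i, (t i ∩ X).powerset.filter (fun Y => Y.Nonempty) =
      (X.powerset.filter (fun Y => Y.Nonempty)).filter (fun Y => Y ⊆ t i) := by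
    intro i; ext Y; simp only [Finset.mem_filter, Finset.mem_powerset, Finset.subset_inter_iff]; tauto
  simp_rw [h]
  rw [Finset.sum_congr rfl (fun i _ => Finset.sum_filter _ _), Finset.sum_comm]
  refine Finset.sum_congr rfl fun Y _ => ?_
  rw [← Finset.sum_filter, Finset.sum_const, nsmul_eq_mul, mul_comm]
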